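/- Let J : ℝ → [0,∞) be a convex function, and let g : ℝ → [0,∞) be a measurable 2π-periodic function with g ∈ L¹(−π,π). Then for every pair of nonnegative measurable functions u, v : (−π,π) → [0,∞) such that ∫_{−π}^{π}∫_{−π}^{π} J(u(x) − v(y)) g(x−y) dx dy is finite, one has ∫_{−π}^{π}∫_{−π}^{π} J(u^{*}(x) − v^{*}(y)) g^{*per}(x−y) dx dy ≤ ∫_{−π}^{π}∫_{−π}^{π} J(u(x) − v(y)) g(x−y) dx dy. -/

import Mathlib

open MeasureTheory Real

/-- For a measurable set `A ⊂ ℝ` of finite measure, `A^* := (−|A|/2, |A|/2)`. -/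
noncomputable def symmSet (A : Set ℝ) : Set ℝ :=
  Set.Ioo (-((volume A).toReal / 2)) ((volume A).toReal / 2)

/-- Symmetric decreasing rearrangement of a (nonnegative) function on `(−π,π)`:
`u^*(x) := ∫₀^∞ χ_{{u>t}^*}(x) dt`. -/
noncomputable def symmRearr (u : ℝ → ℝ) : ℝ → ℝ := fun x =>
  ∫ t in Set.Ioi (0 : ℝ),
    (symmSet {y | y ∈ Set.Ioo (-π) π ∧ t < u y}).indicator (fun _ => (1 : ℝ)) x

/-- The `2π`-periodic extension of (the restriction to `[−π,π)` of) a function. -/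
noncomputable def periodize (f : ℝ → ℝ) : ℝ → ℝ := fun x =>
  f (x - 2 * π * (⌊(x + π) / (2 * π)⌋ : ℝ))

/-- The periodic rearrangement `f^{*per}`: the `2π`-periodic extension of `(f·χ_{(−π,π)})^*`. -/
noncomputable def perRearr (f : ℝ → ℝ) : ℝ → ℝ := periodize (symmRearr f)

/-!
Layer-cake in `g` replaces the kernel by the indicator of a set `C`, and one studies the joint law
of `(u(x), v(y))` under the measure `𝟙_C (x - y) dx dy` on the torus. Rearranging preserves its
marginals, and by the Riesz rearrangement inequality on the circle it increases the mass of every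
upper right quadrant. Since a convex function vanishing at `t₀` is a superposition of the hinges
`(t - l)₊`, `t₀ ≤ l`, and `(l - t)₊`, `l ≤ t₀`, and the hinge functionals of `x - y` only see
quadrants, the integral of `J (x - y)` decreases.

The Riesz inequality bounds `∫_C 𝟙_A ∗ 𝟙_B` by `t |C| + (|A| - t) (|B| - t)` for suitable `t`, with
equality for centred arcs when `t` is the height of `𝟙_A ∗ 𝟙_B` at the endpoints of `C`. That bound
is equivalent to Pollard's inequality `t (|A| + |B| - t) ≤ ∫ min t (𝟙_A ∗ 𝟙_B)`, which holds on any
compact connected abelian group: Dyson's transform does not decrease the amount by which it fails,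
while contracting an upper bound for that amount.
-/

section IndicatorConv

variable {G : Type*} [AddCommGroup G] [MeasurableSpace G] (μ : Measure G) {A A' B C : Set G}

/-- The convolution `z ↦ μ {x ∈ A | z - x ∈ B}` of the indicator functions of `A` and `B`. -/
noncomputable def indicatorConv (A B : Set G) (z : G) : ℝ := μ.real (A ∩ (z - ·) ⁻¹' B)

lemma indicatorConv_nonneg (A B : Set G) (z : G) : 0 ≤ indicatorConv μ A B z :=
  measureReal_nonneg

lemma indicatorConv_preimage_sub_right (w z : G) :
    indicatorConv μ A ((· - w) ⁻¹' B) (z + w) = indicatorConv μ A B z := by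
  simp only [indicatorConv, Set.preimage_preimage, sub_right_comm, add_sub_cancel_right]

lemma indicatorConv_preimage_neg (z : G) :
    indicatorConv μ A ((0 - ·) ⁻¹' B) z = μ.real (A ∩ (· - z) ⁻¹' B) := by
  simp only [indicatorConv, Set.preimage_preimage, zero_sub, neg_sub]

lemma indicatorConv_le_left [IsFiniteMeasure μ] (A B : Set G) (z : G) :
    indicatorConv μ A B z ≤ μ.real A :=
  measureReal_mono Set.inter_subset_left

lemma integral_min_indicatorConv_preimage_sub_right
    [MeasurableAdd G] [μ.IsAddLeftInvariant] (t : ℝ) (A B : Set G) (w : G) :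
    ∫ z, min t (indicatorConv μ A ((· - w) ⁻¹' B) z) ∂μ =
      ∫ z, min t (indicatorConv μ A B z) ∂μ := by
  rw [← integral_add_right_eq_self _ w]
  simp only [indicatorConv_preimage_sub_right]

lemma measureReal_preimage_const_sub [MeasurableAdd G] [MeasurableNeg G]
    [μ.IsAddLeftInvariant] [μ.IsNegInvariant] (hB : MeasurableSet B) (z : G) :
    μ.real ((z - ·) ⁻¹' B) = μ.real B :=
  (Measure.measurePreserving_sub_left μ z).measureReal_preimage hB.nullMeasurableSet

variable [MeasurableAdd₂ G] [MeasurableNeg G]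

lemma measurable_indicatorConv [SFinite μ] (hA : MeasurableSet A) (hB : MeasurableSet B) :
    Measurable (indicatorConv μ A B) := by
  have hS : MeasurableSet {p : G × G | p.2 ∈ A ∧ p.1 - p.2 ∈ B} :=
    (measurable_snd hA).inter ((measurable_fst.sub measurable_snd) hB)
  exact (measurable_measure_prodMk_left (ν := μ) hS).ennreal_toReal

lemma indicatorConv_comm [μ.IsAddLeftInvariant] [μ.IsNegInvariant]
    (hA : MeasurableSet A) (hB : MeasurableSet B) (z : G) :
    indicatorConv μ A B z = indicatorConv μ B A z := by
  have hS : MeasurableSet (B ∩ (z - ·) ⁻¹' A) := hB.inter (measurable_id.const_sub z hA)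
  rw [indicatorConv, indicatorConv, ← measureReal_preimage_const_sub μ hS z]
  congr 1
  ext x
  simp [and_comm]

variable [IsFiniteMeasure μ]

lemma integrable_indicatorConv (hA : MeasurableSet A) (hB : MeasurableSet B) :
    Integrable (indicatorConv μ A B) μ := by
  refine .of_bound (measurable_indicatorConv μ hA hB).aestronglyMeasurable (μ.real A)
    (.of_forall fun z => ?_)
  rw [Real.norm_of_nonneg (indicatorConv_nonneg ..)]
  exact indicatorConv_le_left ..

lemma integrable_min_indicatorConv (hA : MeasurableSet A) (hB : MeasurableSet B) (t : ℝ) :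
    Integrable (fun z => min t (indicatorConv μ A B z)) μ :=
  (integrable_const t).inf (integrable_indicatorConv μ hA hB)

lemma indicatorConv_union_left (hA' : MeasurableSet A') (hB : MeasurableSet B)
    (hd : Disjoint A A') (z : G) :
    indicatorConv μ (A ∪ A') B z = indicatorConv μ A B z + indicatorConv μ A' B z := by
  have hzB : MeasurableSet ((z - ·) ⁻¹' B) := (measurable_const.sub measurable_id) hB
  rw [indicatorConv, Set.union_inter_distrib_right, measureReal_union
    (hd.mono Set.inter_subset_left Set.inter_subset_left) (hA'.inter hzB)]
  rfl

variable [μ.IsAddLeftInvariant]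

lemma setIntegral_indicatorConv (hA : MeasurableSet A) (hB : MeasurableSet B)
    (hC : MeasurableSet C) :
    ∫ z in C, indicatorConv μ A B z ∂μ =
      (μ.prod μ).real (A ×ˢ B ∩ {p | p.1 + p.2 ∈ C}) := by
  set S : Set (G × G) := {p | p.1 ∈ A ∧ p.2 - p.1 ∈ B ∧ p.2 ∈ C}
  have hS : MeasurableSet S := (measurable_fst hA).inter
    (((measurable_snd.sub measurable_fst) hB).inter (measurable_snd hC))
  have shear : (μ.prod μ) S = (μ.prod μ) (A ×ˢ B ∩ {p | p.1 + p.2 ∈ C}) := by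
    rw [← (measurePreserving_prod_add μ μ).measure_preimage hS.nullMeasurableSet]
    congr 1
    ext p
    simp [S, and_assoc]
  have fibre (z : G) : μ ((fun x => (x, z)) ⁻¹' S) =
      C.indicator (fun z => μ (A ∩ (z - ·) ⁻¹' B)) z := by
    by_cases hz : z ∈ C <;> simp [S, hz, Set.inter_def]
  rw [measureReal_def, ← shear, Measure.prod_apply_symm hS, lintegral_congr fibre,
    lintegral_indicator hC, ← integral_toReal]
  · rfl
  · have hAB : MeasurableSet {p : G × G | p.2 ∈ A ∧ p.1 - p.2 ∈ B} :=
      (measurable_snd hA).inter ((measurable_fst.sub measurable_snd) hB)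
    exact (measurable_measure_prodMk_left (ν := μ) hAB).aemeasurable
  · exact .of_forall fun z => measure_lt_top _ _

lemma integral_indicatorConv (hA : MeasurableSet A) (hB : MeasurableSet B) :
    ∫ z, indicatorConv μ A B z ∂μ = μ.real A * μ.real B := by
  rw [← setIntegral_univ, setIntegral_indicatorConv μ hA hB .univ]
  simp [measureReal_def, Measure.prod_prod]

variable [μ.IsNegInvariant]

lemma indicatorConv_le_right (A : Set G) (hB : MeasurableSet B) (z : G) :
    indicatorConv μ A B z ≤ μ.real B :=
  (measureReal_mono Set.inter_subset_right).trans_eq (measureReal_preimage_const_sub μ hB z)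

lemma indicatorConv_eq_union_inter_add_sdiff (hA : MeasurableSet A) (hB : MeasurableSet B)
    (z : G) : indicatorConv μ A B z =
      indicatorConv μ (A ∪ B) (A ∩ B) z + indicatorConv μ (A \ B) (B \ A) z := by
  have hI := hA.inter hB
  have hAB := hA.diff hB
  have hBA := hB.diff hA
  have dA : Disjoint (A ∩ B) (A \ B) := Set.disjoint_sdiff_inter.symm
  have dB : Disjoint (A ∩ B) (B \ A) := Set.inter_comm B A ▸ Set.disjoint_sdiff_inter.symm
  have dU : Disjoint A (B \ A) := Set.disjoint_sdiff_right
  have split_A {D : Set G} (hD : MeasurableSet D) : indicatorConv μ A D z =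
      indicatorConv μ (A ∩ B) D z + indicatorConv μ (A \ B) D z := by
    conv_lhs => rw [← Set.inter_union_sdiff A B, indicatorConv_union_left μ hAB hD dA]
  have split_B {D : Set G} (hD : MeasurableSet D) : indicatorConv μ B D z =
      indicatorConv μ (A ∩ B) D z + indicatorConv μ (B \ A) D z := by
    conv_lhs => rw [← Set.inter_union_sdiff B A, Set.inter_comm B A,
      indicatorConv_union_left μ hBA hD dB]
  have split_U := indicatorConv_union_left μ hBA hI dU z
  rw [Set.union_sdiff_self] at split_U
  rw [split_U, split_A hB, split_A hI, indicatorConv_comm μ hI hB, indicatorConv_comm μ hAB hB,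
    split_B hI, split_B hAB, indicatorConv_comm μ hI hAB, indicatorConv_comm μ hBA hAB]
  ring

end IndicatorConv

section PollardDefect

variable {G : Type*} [MeasurableSpace G] (μ : Measure G) {A B : Set G} {t : ℝ}

/-- The range of parameters in Pollard's inequality
`t (|A| + |B| - t) ≤ ∫ min t (indicatorConv μ A B)`. -/
structure PollardAdmissible (A B : Set G) (t : ℝ) : Prop where
  measurableSet_left : MeasurableSet A
  measurableSet_right : MeasurableSet B
  nonneg : 0 ≤ t
  le_left : t ≤ μ.real A
  le_right : t ≤ μ.real B
  add_sub_le : μ.real A + μ.real B - t ≤ μ.real Set.univ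

/-- The quantity `|B| (|G| - |A|)`, which dominates the defect in Pollard's inequality. -/
noncomputable def pollardBound (A B : Set G) : ℝ := μ.real B * (μ.real Set.univ - μ.real A)

variable {μ}

lemma PollardAdmissible.swap (h : PollardAdmissible μ A B t) : PollardAdmissible μ B A t where
  measurableSet_left := h.measurableSet_right
  measurableSet_right := h.measurableSet_left
  nonneg := h.nonneg
  le_left := h.le_right
  le_right := h.le_left
  add_sub_le := by linarith [h.add_sub_le]

variable (μ) [AddCommGroup G]

/-- The amount by which Pollard's inequality `t (|A| + |B| - t) ≤ ∫ min t (indicatorConv μ A B)`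
fails. -/
noncomputable def pollardDefect (A B : Set G) (t : ℝ) : ℝ :=
  t * (μ.real A + μ.real B - t) - ∫ z, min t (indicatorConv μ A B z) ∂μ

variable {μ} [MeasurableAdd₂ G] [MeasurableNeg G] [μ.IsAddLeftInvariant] [μ.IsNegInvariant]

lemma pollardDefect_swap (hA : MeasurableSet A) (hB : MeasurableSet B) :
    pollardDefect μ B A t = pollardDefect μ A B t := by
  simp only [pollardDefect, indicatorConv_comm μ hB hA, add_comm (μ.real B)]

variable [IsFiniteMeasure μ]

lemma pollardDefect_le_pollardBound (h : PollardAdmissible μ A B t) :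
    pollardDefect μ A B t ≤ pollardBound μ A B := by
  obtain ⟨hA, hB, ht, -, htb, hadd⟩ := h
  have chord (z : G) : t * indicatorConv μ A B z ≤ μ.real B * min t (indicatorConv μ A B z) := by
    have h0 := indicatorConv_nonneg μ A B z
    have hb := indicatorConv_le_right μ A hB z
    rcases min_cases t (indicatorConv μ A B z) with ⟨hmin, -⟩ | ⟨hmin, -⟩ <;>
      rw [hmin] <;> nlinarith
  have integral_le := integral_mono ((integrable_indicatorConv μ hA hB).const_mul t)
    ((integrable_min_indicatorConv μ hA hB t).const_mul (μ.real B)) chord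
  rw [integral_const_mul, integral_const_mul, integral_indicatorConv μ hA hB] at integral_le
  have mul_le : t * μ.real A ≤ ∫ z, min t (indicatorConv μ A B z) ∂μ := by
    rcases (ht.trans htb).eq_or_lt with hb | hb
    · have ht0 : t = 0 := le_antisymm (htb.trans_eq hb.symm) ht
      calc t * μ.real A = 0 := by rw [ht0, zero_mul]
        _ ≤ _ := integral_nonneg fun z => le_min ht (indicatorConv_nonneg μ A B z)
    · exact le_of_mul_le_mul_left (by linarith) hb
  calc pollardDefect μ A B t ≤ t * (μ.real B - t) := by rw [pollardDefect]; linarith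
    _ ≤ μ.real B * (μ.real Set.univ - μ.real A) :=
      mul_le_mul htb (by linarith) (sub_nonneg.2 htb) measureReal_nonneg

lemma pollardDefect_le_sq (h : PollardAdmissible μ A B t) :
    pollardDefect μ A B t ≤ μ.real Set.univ ^ 2 := by
  have hb : μ.real B ≤ μ.real Set.univ := measureReal_mono (Set.subset_univ B)
  refine (pollardDefect_le_pollardBound h).trans ?_
  rw [pollardBound]
  nlinarith [measureReal_nonneg (μ := μ) (s := A), measureReal_nonneg (μ := μ) (s := B)]

lemma pollardDefect_le_sdiff (h : PollardAdmissible μ A B t) (hI : μ.real (A ∩ B) ≤ t) :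
    PollardAdmissible μ (A \ B) (B \ A) (t - μ.real (A ∩ B)) ∧
      pollardDefect μ A B t ≤ pollardDefect μ (A \ B) (B \ A) (t - μ.real (A ∩ B)) := by
  obtain ⟨hA, hB, -, hta, htb, hadd⟩ := h
  have hAB := measureReal_inter_add_sdiff (μ := μ) (s := A) hB
  have hBA := measureReal_inter_add_sdiff (μ := μ) (s := B) hA
  rw [Set.inter_comm B A] at hBA
  have hU := measureReal_union_add_inter (μ := μ) (s := A) hB
  refine ⟨⟨hA.diff hB, hB.diff hA, by linarith, by linarith, by linarith, ?_⟩, ?_⟩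
  · linarith [measureReal_nonneg (μ := μ) (s := A ∩ B)]
  have truncate (z : G) : indicatorConv μ (A ∪ B) (A ∩ B) z +
      min (t - μ.real (A ∩ B)) (indicatorConv μ (A \ B) (B \ A) z) ≤
        min t (indicatorConv μ A B z) := by
    rw [indicatorConv_eq_union_inter_add_sdiff μ hA hB z, ← min_add_add_left]
    exact min_le_min_right _
      (by linarith [indicatorConv_le_right μ (A ∪ B) (hA.inter hB) z])
  have hcore := integrable_indicatorConv μ (hA.union hB) (hA.inter hB)
  have hrest := integrable_min_indicatorConv μ (hA.diff hB) (hB.diff hA) (t - μ.real (A ∩ B))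
  have integral_le := integral_mono (hcore.add hrest)
    (integrable_min_indicatorConv μ hA hB t) truncate
  simp only [Pi.add_apply] at integral_le
  rw [integral_add hcore hrest, integral_indicatorConv μ (hA.union hB) (hA.inter hB)]
    at integral_le
  rw [pollardDefect, pollardDefect]
  rw [show μ.real (A ∪ B) = μ.real A + μ.real B - μ.real (A ∩ B) by linarith] at integral_le
  rw [show μ.real (A \ B) = μ.real A - μ.real (A ∩ B) by linarith,
    show μ.real (B \ A) = μ.real B - μ.real (A ∩ B) by linarith]
  linarith

lemma pollardDefect_le_union_inter (h : PollardAdmissible μ A B t) (hI : t ≤ μ.real (A ∩ B)) :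
    PollardAdmissible μ (A ∪ B) (A ∩ B) t ∧
      pollardDefect μ A B t ≤ pollardDefect μ (A ∪ B) (A ∩ B) t := by
  obtain ⟨hA, hB, ht, hta, -, hadd⟩ := h
  have hU := measureReal_union_add_inter (μ := μ) (s := A) hB
  refine ⟨⟨hA.union hB, hA.inter hB, ht, hta.trans (measureReal_mono Set.subset_union_left), hI,
    by rwa [hU]⟩, ?_⟩
  rw [pollardDefect, pollardDefect, hU]
  refine sub_le_sub_left (integral_mono
    (integrable_min_indicatorConv μ (hA.union hB) (hA.inter hB) t)
    (integrable_min_indicatorConv μ hA hB t) fun z => min_le_min_left t ?_) _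
  rw [indicatorConv_eq_union_inter_add_sdiff μ hA hB z]
  exact le_add_of_nonneg_right (indicatorConv_nonneg ..)

end PollardDefect

section Pollard

variable {G : Type*} [AddCommGroup G] [TopologicalSpace G] [IsTopologicalAddGroup G]
  [CompactSpace G] [SecondCountableTopology G] [MeasurableSpace G] [BorelSpace G]
  (μ : Measure G) [μ.IsAddHaarMeasure] {A B C : Set G} {t : ℝ}

lemma continuous_indicatorConv (hA : MeasurableSet A) (hB : MeasurableSet B) :
    Continuous (indicatorConv μ A B) := by
  have hmeas (z : G) : MeasurableSet ((z - ·) ⁻¹' B) := (measurable_const.sub measurable_id) hB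
  have hreflect : Continuous fun z : G => (⟨(z - ·), by fun_prop⟩ : C(G, G)) :=
    ContinuousMap.continuous_of_continuous_uncurry _ (continuous_fst.sub continuous_snd)
  refine continuous_iff_continuousAt.2 fun z => tendsto_iff_dist_tendsto_zero.2 ?_
  have hsymm := (ENNReal.tendsto_toReal ENNReal.zero_ne_top).comp <|
    tendsto_measure_symmDiff_preimage_nhds_zero (μ := μ) (ν := μ) (s := B) (hreflect.tendsto z)
      (.of_forall fun w => Measure.measurePreserving_sub_left μ w)
      (Measure.measurePreserving_sub_left μ z) hB.nullMeasurableSet (measure_ne_top _ _)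
  refine squeeze_zero (fun _ => dist_nonneg) (fun w => ?_) hsymm
  refine (abs_measureReal_sub_le_measureReal_symmDiff (hA.inter (hmeas w)).nullMeasurableSet
    (hA.inter (hmeas z)).nullMeasurableSet).trans (measureReal_mono ?_)
  rw [← Set.inter_symmDiff_distrib_left]
  exact Set.inter_subset_right

lemma exists_measureReal_inter_translate_eq [ConnectedSpace G] (hA : MeasurableSet A)
    (hB : MeasurableSet B) :
    ∃ w : G, μ.real (A ∩ (· - w) ⁻¹' B) = μ.real A * μ.real B / μ.real Set.univ := by
  have hB' : MeasurableSet ((0 - ·) ⁻¹' B) := (measurable_const.sub measurable_id) hB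
  have hint := integrable_indicatorConv μ hA hB'
  have average_eq : ⨍ z, indicatorConv μ A ((0 - ·) ⁻¹' B) z ∂μ =
      μ.real A * μ.real B / μ.real Set.univ := by
    rw [average_eq, integral_indicatorConv μ hA hB', measureReal_preimage_const_sub μ hB,
      smul_eq_mul]
    ring
  simp only [← indicatorConv_preimage_neg, ← average_eq]
  exact mem_range_of_exists_le_of_exists_ge (continuous_indicatorConv μ hA hB')
    (exists_le_average (NeZero.ne μ) hint) (exists_average_le (NeZero.ne μ) hint)

variable {μ}

lemma exists_pollardDefect_preimage_sub_right [ConnectedSpace G] (h : PollardAdmissible μ A B t) :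
    ∃ B₁, μ.real B₁ = μ.real B ∧ PollardAdmissible μ A B₁ t ∧
      pollardDefect μ A B₁ t = pollardDefect μ A B t ∧
      μ.real (A ∩ B₁) * μ.real Set.univ = μ.real A * μ.real B := by
  obtain ⟨hA, hB, ht, hta, htb, hadd⟩ := h
  obtain ⟨w, hw⟩ := exists_measureReal_inter_translate_eq μ hA hB
  have hB₁ : μ.real ((· - w) ⁻¹' B) = μ.real B :=
    (measurePreserving_sub_right μ w).measureReal_preimage hB.nullMeasurableSet
  refine ⟨(· - w) ⁻¹' B, hB₁, ⟨hA, measurable_id.sub_const w hB, ht, hta, by rwa [hB₁],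
    by rwa [hB₁]⟩, ?_, ?_⟩
  · rw [pollardDefect, pollardDefect, hB₁, integral_min_indicatorConv_preimage_sub_right]
  · rw [hw, div_mul_cancel₀ _ measureReal_univ_pos.ne']

-- Dyson's transform: translate `B` until `|A ∩ B| = |A| |B| / |G|`, then pass to
-- `(A \ B, B \ A)` or `(A ∪ B, A ∩ B)` according to whether `|A ∩ B| ≤ t`.
lemma exists_pollardDefect_le_and_pollardBound_le [ConnectedSpace G]
    (h : PollardAdmissible μ A B t) (hBA : μ.real B ≤ μ.real A) :
    ∃ A' B' t', PollardAdmissible μ A' B' t' ∧ pollardDefect μ A B t ≤ pollardDefect μ A' B' t' ∧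
      μ.real Set.univ ^ 2 * pollardBound μ A' B' ≤
        pollardBound μ A B * (μ.real Set.univ ^ 2 - pollardBound μ A B) := by
  obtain ⟨B₁, hB₁, h₁, hdefect, hI⟩ := exists_pollardDefect_preimage_sub_right h
  have hM : 0 < μ.real Set.univ := measureReal_univ_pos (μ := μ)
  have haM : μ.real A ≤ μ.real Set.univ := measureReal_mono (Set.subset_univ A)
  have hb : 0 ≤ μ.real B := measureReal_nonneg
  have union_add := measureReal_union_add_inter (μ := μ) (s := A) h₁.measurableSet_right
  have sdiff_add := measureReal_inter_add_sdiff (μ := μ) (s := A) h₁.measurableSet_right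
  have sdiff_add' := measureReal_inter_add_sdiff (μ := μ) (s := B₁) h.measurableSet_left
  rw [Set.inter_comm B₁ A] at sdiff_add'
  rw [hB₁] at union_add sdiff_add'
  simp only [← hdefect, pollardBound]
  set M := μ.real Set.univ
  set a := μ.real A
  set b := μ.real B
  set i := μ.real (A ∩ B₁)
  have hq : 0 ≤ b * (M - a) := mul_nonneg hb (sub_nonneg.2 haM)
  rcases le_total i t with hIt | htI
  · obtain ⟨hadm, hle⟩ := pollardDefect_le_sdiff h₁ hIt
    refine ⟨_, _, _, hadm, hle, ?_⟩
    calc M ^ 2 * (μ.real (B₁ \ A) * (M - μ.real (A \ B₁)))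
        = M ^ 2 * ((b - i) * (M - (a - i))) := by rw [← sdiff_add, ← sdiff_add']; ring
      _ = (M * b - i * M) * (M ^ 2 - M * a + i * M) := by ring
      _ = b * (M - a) * (M ^ 2 - a * (M - b)) := by rw [hI]; ring
      _ ≤ b * (M - a) * (M ^ 2 - b * (M - a)) := mul_le_mul_of_nonneg_left (by nlinarith) hq
  · obtain ⟨hadm, hle⟩ := pollardDefect_le_union_inter h₁ htI
    refine ⟨_, _, _, hadm, hle, ?_⟩
    calc M ^ 2 * (i * (M - μ.real (A ∪ B₁)))
        = i * M * (M ^ 2 - M * a - M * b + i * M) := by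
          rw [eq_sub_of_add_eq union_add]; ring
      _ = b * (M - a) * (a * (M - b)) := by rw [hI]; ring
      _ ≤ b * (M - a) * (M ^ 2 - b * (M - a)) := mul_le_mul_of_nonneg_left (by nlinarith) hq

lemma mul_sq_le_pow_mul_pollardBound [ConnectedSpace G] {δ : ℝ} (hδ : 0 ≤ δ) (n : ℕ)
    (h : PollardAdmissible μ A B t) (hD : δ * μ.real Set.univ ^ 2 ≤ pollardDefect μ A B t) :
    δ * μ.real Set.univ ^ 2 ≤ (1 - δ) ^ n * pollardBound μ A B := by
  induction n generalizing A B t with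
  | zero => simpa using hD.trans (pollardDefect_le_pollardBound h)
  | succ n ih =>
    have hM : 0 < μ.real Set.univ := measureReal_univ_pos
    have ha : μ.real A ≤ μ.real Set.univ := measureReal_mono (Set.subset_univ A)
    have hb : μ.real B ≤ μ.real Set.univ := measureReal_mono (Set.subset_univ B)
    have hδ_le := hD.trans (pollardDefect_le_pollardBound h)
    have hδ1 : 0 ≤ 1 - δ := sub_nonneg.2 <|
      le_of_mul_le_mul_right ((hD.trans (pollardDefect_le_sq h)).trans_eq (one_mul _).symm)
        (pow_pos hM 2)
    wlog hBA : μ.real B ≤ μ.real A generalizing A B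
    · have hDswap := hD.trans_eq (pollardDefect_swap h.measurableSet_right h.measurableSet_left)
      refine (this h.swap hDswap hb ha (hDswap.trans (pollardDefect_le_pollardBound h.swap))
        (le_of_not_ge hBA)).trans (mul_le_mul_of_nonneg_left ?_ (by positivity))
      rw [pollardBound, pollardBound]
      nlinarith
    obtain ⟨A', B', t', h', hdefect, hbound⟩ :=
      exists_pollardDefect_le_and_pollardBound_le h hBA
    have contraction : pollardBound μ A' B' ≤ (1 - δ) * pollardBound μ A B := by
      refine le_of_mul_le_mul_left (hbound.trans ?_) (pow_pos hM 2)
      nlinarith [mul_le_mul_of_nonneg_left hδ_le (mul_nonneg hδ (sq_nonneg _) |>.trans hδ_le)]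
    calc δ * μ.real Set.univ ^ 2 ≤ (1 - δ) ^ n * pollardBound μ A' B' := ih h' (hD.trans hdefect)
      _ ≤ (1 - δ) ^ n * ((1 - δ) * pollardBound μ A B) := by gcongr
      _ = (1 - δ) ^ (n + 1) * pollardBound μ A B := by ring

theorem pollard_inequality [ConnectedSpace G] (h : PollardAdmissible μ A B t) :
    t * (μ.real A + μ.real B - t) ≤ ∫ z, min t (indicatorConv μ A B z) ∂μ := by
  have hM : 0 < μ.real Set.univ := measureReal_univ_pos
  by_contra! hlt
  set δ := pollardDefect μ A B t / μ.real Set.univ ^ 2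
  have hδ : 0 < δ := div_pos (sub_pos.2 hlt) (by positivity)
  have hδM : δ * μ.real Set.univ ^ 2 = pollardDefect μ A B t := div_mul_cancel₀ _ (by positivity)
  have hδ1 : δ ≤ 1 := div_le_one_of_le₀ (pollardDefect_le_sq h) (by positivity)
  have decay : Filter.Tendsto (fun n : ℕ => (1 - δ) ^ n * pollardBound μ A B) Filter.atTop
      (nhds (0 * pollardBound μ A B)) :=
    (tendsto_pow_atTop_nhds_zero_of_lt_one (by linarith) (by linarith)).mul_const _
  have := ge_of_tendsto' decay fun n => mul_sq_le_pow_mul_pollardBound hδ.le n h hδM.le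
  nlinarith [pow_pos hM 2]

lemma setIntegral_indicatorConv_le [ConnectedSpace G] (h : PollardAdmissible μ A B t)
    (C : Set G) :
    ∫ z in C, indicatorConv μ A B z ∂μ ≤ t * μ.real C + (μ.real A - t) * (μ.real B - t) := by
  have hconv := integrable_indicatorConv μ h.measurableSet_left h.measurableSet_right
  have hmin := integrable_min_indicatorConv μ h.measurableSet_left h.measurableSet_right t
  have capped_le : ∫ z in C, min t (indicatorConv μ A B z) ∂μ ≤ t * μ.real C := by
    refine (setIntegral_mono hmin.integrableOn (integrable_const t).integrableOn
      fun z => min_le_left _ _).trans_eq ?_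
    rw [setIntegral_const, smul_eq_mul, mul_comm]
  have excess_le : ∫ z in C, (indicatorConv μ A B z - min t (indicatorConv μ A B z)) ∂μ ≤
      (μ.real A - t) * (μ.real B - t) := by
    refine (setIntegral_le_integral (hconv.sub hmin)
      (.of_forall fun z => sub_nonneg.2 (min_le_right _ _))).trans ?_
    simp only [Pi.sub_apply]
    rw [integral_sub hconv hmin,
      integral_indicatorConv μ h.measurableSet_left h.measurableSet_right]
    linarith [pollard_inequality h]
  rw [integral_sub hconv.integrableOn hmin.integrableOn] at excess_le
  linarith

end Pollard

section Arcs

variable {T a b c s : ℝ}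

lemma exists_ball_subset_ball_inter_ball (z : AddCircle T) (hsa : s ≤ a) (hsb : s ≤ b)
    (hz : ‖z‖ ≤ (a + b) / 2 - s) :
    ∃ w : AddCircle T, Metric.ball w (s / 2) ⊆ Metric.ball 0 (a / 2) ∩ Metric.ball z (b / 2) := by
  obtain ⟨ζ, rfl, hζ⟩ : ∃ ζ : ℝ, (ζ : AddCircle T) = z ∧ ‖ζ‖ = ‖z‖ := by
    induction z using QuotientAddGroup.induction_on with
    | H x => exact ⟨x - round (T⁻¹ * x) * T, by
        rw [AddCircle.coe_sub, ← zsmul_eq_mul, AddCircle.coe_zsmul, AddCircle.coe_period, smul_zero,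
          sub_zero], (AddCircle.norm_eq T).symm⟩
  obtain ⟨w, hw0, hwζ⟩ := exists_dist_le_le (x := (0 : ℝ)) (z := ζ) (δ := (a - s) / 2)
    (ε := (b - s) / 2) (by linarith) (by linarith) (by rw [dist_zero_left, hζ]; linarith)
  have dist_coe_le (x y : ℝ) : dist (x : AddCircle T) y ≤ dist x y := by
    rw [dist_eq_norm, dist_eq_norm, ← AddCircle.coe_sub]
    exact QuotientAddGroup.norm_mk_le_norm
  refine ⟨w, Set.subset_inter (Metric.ball_subset_ball' ?_) (Metric.ball_subset_ball' ?_)⟩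
  · have hw := dist_coe_le w 0
    rw [dist_comm w, AddCircle.coe_zero] at hw
    linarith
  · linarith [dist_coe_le w ζ]

variable [hT : Fact (0 < T)]

lemma measureReal_univ_addCircle : volume.real (Set.univ : Set (AddCircle T)) = T := by
  simp [measureReal_def, AddCircle.measure_univ, hT.out.le]

lemma measureReal_le_period (A : Set (AddCircle T)) : volume.real A ≤ T :=
  (measureReal_mono (Set.subset_univ A)).trans_eq measureReal_univ_addCircle

lemma measureReal_ball_half (x : AddCircle T) (ha : 0 ≤ a) :
    volume.real (Metric.ball x (a / 2)) = min T a := by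
  rw [← measureReal_congr AddCircle.closedBall_ae_eq_ball, measureReal_def,
    AddCircle.volume_closedBall, mul_div_cancel₀ _ two_ne_zero,
    ENNReal.toReal_ofReal (le_min hT.out.le ha)]

/-- The open arc centred at `0` with the same length as `A`: the symmetric rearrangement of a subset
of the circle. -/
def arcSymm (A : Set (AddCircle T)) : Set (AddCircle T) := Metric.ball 0 (volume.real A / 2)

lemma measureReal_arcSymm (A : Set (AddCircle T)) : volume.real (arcSymm A) = volume.real A := by
  rw [arcSymm, measureReal_ball_half 0 measureReal_nonneg, min_eq_right (measureReal_le_period A)]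

lemma indicatorConv_ball (a b : ℝ) (z : AddCircle T) :
    indicatorConv volume (Metric.ball 0 (a / 2)) (Metric.ball 0 (b / 2)) z =
      volume.real (Metric.ball 0 (a / 2) ∩ Metric.ball z (b / 2)) := by
  rw [indicatorConv]
  congr 2
  ext x
  simp [dist_eq_norm, norm_sub_rev]

lemma indicatorConv_ball_le_min (z : AddCircle T) (ha : 0 ≤ a) (hb : 0 ≤ b) (haT : a ≤ T)
    (hbT : b ≤ T) :
    indicatorConv volume (Metric.ball (0 : AddCircle T) (a / 2)) (Metric.ball 0 (b / 2)) z ≤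
      min a b := by
  have hle := le_min
    (indicatorConv_le_left volume (Metric.ball 0 (a / 2)) (Metric.ball 0 (b / 2)) z)
    (indicatorConv_le_right volume (Metric.ball 0 (a / 2)) measurableSet_ball z)
  rwa [measureReal_ball_half 0 ha, measureReal_ball_half 0 hb, min_eq_right haT,
    min_eq_right hbT] at hle

lemma le_indicatorConv_ball (z : AddCircle T) (hsa : s ≤ a) (hsb : s ≤ b) (hs : 0 ≤ s) (haT : a ≤ T)
    (hz : ‖z‖ ≤ (a + b) / 2 - s) :
    s ≤ indicatorConv volume (Metric.ball (0 : AddCircle T) (a / 2)) (Metric.ball 0 (b / 2)) z := by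
  obtain ⟨w, hw⟩ := exists_ball_subset_ball_inter_ball z hsa hsb hz
  rw [indicatorConv_ball]
  calc s = volume.real (Metric.ball w (s / 2)) := by
        rw [measureReal_ball_half w hs, min_eq_right (hsa.trans haT)]
    _ ≤ _ := measureReal_mono hw

lemma add_sub_period_le_indicatorConv_ball (z : AddCircle T) (ha : 0 ≤ a) (hb : 0 ≤ b)
    (haT : a ≤ T) (hbT : b ≤ T) :
    a + b - T ≤
      indicatorConv volume (Metric.ball (0 : AddCircle T) (a / 2)) (Metric.ball 0 (b / 2)) z := by
  rw [indicatorConv_ball]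
  have h := measureReal_union_add_inter (μ := volume) (s := Metric.ball (0 : AddCircle T) (a / 2))
    (t := Metric.ball z (b / 2)) measurableSet_ball
  rw [measureReal_ball_half _ ha, measureReal_ball_half _ hb, min_eq_right haT,
    min_eq_right hbT] at h
  linarith [measureReal_le_period (Metric.ball (0 : AddCircle T) (a / 2) ∪ Metric.ball z (b / 2))]

/-- The value that the convolution of two centred arcs of lengths `a` and `b` takes at the endpoints
of a centred arc of length `c`. -/
noncomputable def arcHeight (T a b c : ℝ) : ℝ :=
  max (max 0 (a + b - T)) (min (min a b) ((a + b - c) / 2))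

lemma arcHeight_nonneg (T a b c : ℝ) : 0 ≤ arcHeight T a b c :=
  (le_max_left _ _).trans (le_max_left _ _)

lemma add_sub_le_arcHeight (T a b c : ℝ) : a + b - T ≤ arcHeight T a b c :=
  (le_max_right _ _).trans (le_max_left _ _)

lemma arcHeight_le_min {T a b : ℝ} (ha : 0 ≤ a) (hb : 0 ≤ b) (haT : a ≤ T) (hbT : b ≤ T) (c : ℝ) :
    arcHeight T a b c ≤ min a b :=
  max_le (max_le (le_min ha hb) (le_min (by linarith) (by linarith))) (min_le_left _ _)

lemma arcHeight_le_indicatorConv_ball (ha : 0 ≤ a) (hb : 0 ≤ b) (haT : a ≤ T) (hbT : b ≤ T)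
    {z : AddCircle T} (hz : z ∈ Metric.ball 0 (c / 2)) : arcHeight T a b c ≤
      indicatorConv volume (Metric.ball (0 : AddCircle T) (a / 2)) (Metric.ball 0 (b / 2)) z := by
  rw [mem_ball_zero_iff] at hz
  refine max_le (max_le (indicatorConv_nonneg ..)
    (add_sub_period_le_indicatorConv_ball z ha hb haT hbT)) ?_
  rcases le_total (min (min a b) ((a + b - c) / 2)) 0 with h | h
  · exact h.trans (indicatorConv_nonneg ..)
  · refine le_indicatorConv_ball z ((min_le_left _ _).trans (min_le_left _ _))
      ((min_le_left _ _).trans (min_le_right _ _)) h haT ?_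
    linarith [min_le_right (min a b) ((a + b - c) / 2)]

lemma le_measureReal_le_indicatorConv_ball (haT : a ≤ T)
    (hs : arcHeight T a b c < s) (hsm : s < min a b) :
    a + b - 2 * s ≤ (volume.restrict (Metric.ball (0 : AddCircle T) (c / 2))).real
      {z | s ≤ indicatorConv volume (Metric.ball 0 (a / 2)) (Metric.ball 0 (b / 2)) z} := by
  obtain ⟨hsa, hsb⟩ := lt_min_iff.1 hsm
  have hs0 : 0 ≤ s := (arcHeight_nonneg T a b c).trans hs.le
  have hsT : a + b - T ≤ s := (add_sub_le_arcHeight T a b c).trans hs.le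
  have hsc : (a + b - c) / 2 < s := by
    by_contra! h
    exact hs.not_ge ((le_min hsm.le h).trans (le_max_right _ _))
  have hball : Metric.ball (0 : AddCircle T) ((a + b - 2 * s) / 2) ⊆ Metric.ball 0 (c / 2) :=
    Metric.ball_subset_ball (by linarith)
  calc a + b - 2 * s = volume.real (Metric.ball (0 : AddCircle T) ((a + b - 2 * s) / 2)) := by
        rw [measureReal_ball_half 0 (by linarith), min_eq_right (by linarith)]
    _ = (volume.restrict (Metric.ball (0 : AddCircle T) (c / 2))).real
          (Metric.ball (0 : AddCircle T) ((a + b - 2 * s) / 2)) := by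
        rw [measureReal_restrict_apply measurableSet_ball, Set.inter_eq_left.2 hball]
    _ ≤ _ := by
        refine measureReal_mono fun z hz => le_indicatorConv_ball z hsa.le hsb.le hs0 haT ?_
        linarith [mem_ball_zero_iff.1 hz]

lemma le_setIntegral_indicatorConv_ball (ha : 0 ≤ a) (hb : 0 ≤ b) (hc : 0 ≤ c) (haT : a ≤ T)
    (hbT : b ≤ T) (hcT : c ≤ T) :
    arcHeight T a b c * c + (a - arcHeight T a b c) * (b - arcHeight T a b c) ≤
      ∫ z in Metric.ball (0 : AddCircle T) (c / 2),
        indicatorConv volume (Metric.ball 0 (a / 2)) (Metric.ball 0 (b / 2)) z := by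
  set t := arcHeight T a b c
  set r := indicatorConv volume (Metric.ball (0 : AddCircle T) (a / 2)) (Metric.ball 0 (b / 2))
  set ν := volume.restrict (Metric.ball (0 : AddCircle T) (c / 2))
  have htm : t ≤ min a b := arcHeight_le_min ha hb haT hbT c
  have hr : Integrable r ν :=
    (integrable_indicatorConv volume measurableSet_ball measurableSet_ball).integrableOn
  have ht_le : ∀ᵐ z ∂ν, t ≤ r z := (ae_restrict_iff' measurableSet_ball).2 <|
    .of_forall fun z hz => arcHeight_le_indicatorConv_ball ha hb haT hbT hz
  have antitone_level : Antitone fun s => ν.real {z | s ≤ r z - t} := fun s s' hss =>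
    measureReal_mono fun z hz => hss.trans hz
  have excess_ge : (a - t) * (b - t) ≤ ∫ z, (r z - t) ∂ν := by
    calc (a - t) * (b - t) = ∫ s in (0)..(min a b - t), ((a + b - 2 * t) - 2 * s) := by
          rw [intervalIntegral.integral_sub (Continuous.intervalIntegrable (by fun_prop) _ _)
            (Continuous.intervalIntegrable (by fun_prop) _ _), intervalIntegral.integral_const_mul,
            integral_id, intervalIntegral.integral_const, smul_eq_mul]
          rcases min_cases a b with ⟨hmin, -⟩ | ⟨hmin, -⟩ <;> rw [hmin] <;> ring
      _ ≤ ∫ s in (0)..(min a b - t), ν.real {z | s ≤ r z - t} := by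
          refine intervalIntegral.integral_mono_on_of_le_Ioo (sub_nonneg.2 htm)
            (Continuous.intervalIntegrable (by fun_prop) _ _) antitone_level.intervalIntegrable
            fun s hs => ?_
          have hle := le_measureReal_le_indicatorConv_ball (c := c) haT
            (lt_add_of_pos_left t hs.1) (lt_sub_iff_add_lt.1 hs.2)
          simp only [le_sub_iff_add_le]
          linarith
      _ = ∫ z, (r z - t) ∂ν := by
          rw [intervalIntegral.integral_of_le (sub_nonneg.2 htm)]
          have r_le (z) : r z - t ≤ min a b - t :=
            sub_le_sub_right (indicatorConv_ball_le_min z ha hb haT hbT) t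
          exact ((hr.sub (integrable_const t)).integral_eq_integral_Ioc_meas_le
            (ht_le.mono fun z => sub_nonneg.2) (.of_forall r_le)).symm
  rw [integral_sub hr (integrable_const t), integral_const, smul_eq_mul,
    measureReal_restrict_apply .univ, Set.univ_inter, measureReal_ball_half 0 hc,
    min_eq_right hcT] at excess_ge
  linarith

theorem setIntegral_indicatorConv_le_arcSymm {A B C : Set (AddCircle T)} (hA : MeasurableSet A)
    (hB : MeasurableSet B) :
    ∫ z in C, indicatorConv volume A B z ≤
      ∫ z in arcSymm C, indicatorConv volume (arcSymm A) (arcSymm B) z := by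
  have hle := arcHeight_le_min (T := T) (measureReal_nonneg (μ := volume) (s := A))
    (measureReal_nonneg (μ := volume) (s := B)) (measureReal_le_period A) (measureReal_le_period B)
    (volume.real C)
  have hadm : PollardAdmissible volume A B
      (arcHeight T (volume.real A) (volume.real B) (volume.real C)) :=
    { measurableSet_left := hA
      measurableSet_right := hB
      nonneg := arcHeight_nonneg _ _ _ _
      le_left := hle.trans (min_le_left _ _)
      le_right := hle.trans (min_le_right _ _)
      add_sub_le := by
        rw [measureReal_univ_addCircle]
        linarith [add_sub_le_arcHeight T (volume.real A) (volume.real B) (volume.real C)] }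
  exact (setIntegral_indicatorConv_le hadm C).trans <| le_setIntegral_indicatorConv_ball
    measureReal_nonneg measureReal_nonneg measureReal_nonneg (measureReal_le_period A)
    (measureReal_le_period B) (measureReal_le_period C)

end Arcs

section DiffMeasure

open scoped Pointwise

variable {G : Type*} [AddCommGroup G] [MeasurableSpace G] (μ : Measure G) {A A' B B' C : Set G}

/-- The restriction of `μ × μ` to the pairs with difference in `C`, that is, the measure on `G × G`
with density `𝟙_C (x - y)`. -/
noncomputable def diffMeasure (C : Set G) : Measure (G × G) :=
  (μ.prod μ).restrict {p | p.1 - p.2 ∈ C}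

instance [IsFiniteMeasure μ] (C : Set G) : IsFiniteMeasure (diffMeasure μ C) :=
  inferInstanceAs (IsFiniteMeasure ((μ.prod μ).restrict _))

variable [MeasurableAdd₂ G] [MeasurableNeg G] [μ.IsAddLeftInvariant] [μ.IsNegInvariant]

lemma indicatorConv_congr_ae (hA : A =ᵐ[μ] A') (hB : B =ᵐ[μ] B') (z : G) :
    indicatorConv μ A B z = indicatorConv μ A' B' z :=
  measureReal_congr <| hA.inter <|
    (Measure.measurePreserving_sub_left μ z).quasiMeasurePreserving.preimage_ae_eq hB

variable [IsFiniteMeasure μ]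

lemma diffMeasure_prod (hA : MeasurableSet A) (hB : MeasurableSet B) (hC : MeasurableSet C) :
    diffMeasure μ C (A ×ˢ B) = ENNReal.ofReal (∫ z in C, indicatorConv μ A (-B) z ∂μ) := by
  have hS : MeasurableSet (A ×ˢ (-B) ∩ {p : G × G | p.1 + p.2 ∈ C}) :=
    (hA.prod hB.neg).inter (measurable_add hC)
  have reflect : MeasurePreserving (Prod.map id Neg.neg) (μ.prod μ) (μ.prod μ) :=
    (MeasurePreserving.id μ).prod (Measure.measurePreserving_neg μ)
  rw [setIntegral_indicatorConv μ hA hB.neg hC, ofReal_measureReal,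
    ← reflect.measure_preimage hS.nullMeasurableSet, diffMeasure,
    Measure.restrict_apply (hA.prod hB)]
  congr 1
  ext p
  simp [sub_eq_add_neg]

lemma fst_diffMeasure (hC : MeasurableSet C) : (diffMeasure μ C).fst = μ C • μ := by
  ext A hA
  rw [Measure.fst_apply hA, ← Set.prod_univ, diffMeasure_prod μ hA .univ hC]
  simp [indicatorConv, ENNReal.ofReal_mul]

lemma snd_diffMeasure (hC : MeasurableSet C) : (diffMeasure μ C).snd = μ C • μ := by
  ext B hB
  rw [Measure.snd_apply hB, ← Set.univ_prod, diffMeasure_prod μ .univ hB hC]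
  have (z : G) : indicatorConv μ Set.univ (-B) z = μ.real B := by
    rw [indicatorConv, Set.univ_inter, measureReal_preimage_const_sub μ hB.neg, measureReal_def,
      Measure.measure_neg, measureReal_def]
  simp [this, ENNReal.ofReal_mul]

variable {α β : Type*} [MeasurableSpace α] [MeasurableSpace β] {U : G → α} {V : G → β}

lemma fst_map_prodMap_diffMeasure (hU : Measurable U) (hV : Measurable V) (hC : MeasurableSet C) :
    ((diffMeasure μ C).map (Prod.map U V)).fst = μ C • μ.map U := by
  rw [← Measure.map_smul, ← fst_diffMeasure μ hC, Measure.fst, Measure.fst,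
    Measure.map_map measurable_fst (hU.prodMap hV), Measure.map_map hU measurable_fst]
  rfl

lemma snd_map_prodMap_diffMeasure (hU : Measurable U) (hV : Measurable V) (hC : MeasurableSet C) :
    ((diffMeasure μ C).map (Prod.map U V)).snd = μ C • μ.map V := by
  rw [← Measure.map_smul, ← snd_diffMeasure μ hC, Measure.snd, Measure.snd,
    Measure.map_map measurable_snd (hU.prodMap hV), Measure.map_map hV measurable_snd]
  rfl

end DiffMeasure

section CircleRiesz

open scoped Pointwise

variable {T : ℝ} [hT : Fact (0 < T)] {A A' B B' C C' : Set (AddCircle T)}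

lemma arcSymm_neg (B : Set (AddCircle T)) : arcSymm (-B) = arcSymm B := by
  rw [arcSymm, measureReal_def, Measure.measure_neg, arcSymm, measureReal_def]

lemma neg_arcSymm (B : Set (AddCircle T)) : -arcSymm B = arcSymm B := by
  ext x
  simp [arcSymm]

lemma diffMeasure_prod_le (hA : MeasurableSet A) (hB : MeasurableSet B) (hC : MeasurableSet C)
    (hA' : MeasurableSet A') (hB' : MeasurableSet B') (hC' : MeasurableSet C')
    (hAA' : A' =ᵐ[volume] arcSymm A) (hBB' : B' =ᵐ[volume] arcSymm B)
    (hCC' : C' =ᵐ[volume] arcSymm C) :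
    diffMeasure volume C (A ×ˢ B) ≤ diffMeasure volume C' (A' ×ˢ B') := by
  have hneg : (-B' : Set (AddCircle T)) =ᵐ[volume] arcSymm (-B) := by
    rw [arcSymm_neg, ← neg_arcSymm]
    exact (Measure.measurePreserving_neg volume).quasiMeasurePreserving.preimage_ae_eq hBB'
  rw [diffMeasure_prod _ hA hB hC, diffMeasure_prod _ hA' hB' hC', Measure.restrict_congr_set hCC']
  simp only [indicatorConv_congr_ae volume hAA' hneg]
  exact ENNReal.ofReal_le_ofReal (setIntegral_indicatorConv_le_arcSymm hA hB.neg)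

end CircleRiesz

section Hinge

variable {f : ℝ → ℝ} {t₀ : ℝ}

lemma lintegral_ofReal_const_sub (m : Measure ℝ) [SFinite m] (t : ℝ) :
    ∫⁻ l, ENNReal.ofReal (t - l) ∂m = ∫⁻ s in Set.Iio t, m (Set.Iic s) := by
  have hS : MeasurableSet {q : ℝ × ℝ | q.1 ≤ q.2 ∧ q.2 < t} := by measurability
  calc ∫⁻ l, ENNReal.ofReal (t - l) ∂m = ∫⁻ l, volume (Set.Ico l t) ∂m := by
        simp only [Real.volume_Ico]
    _ = (m.prod volume) {q | q.1 ≤ q.2 ∧ q.2 < t} := (Measure.prod_apply hS).symm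
    _ = ∫⁻ s, (Set.Iio t).indicator (fun s => m (Set.Iic s)) s := by
        rw [Measure.prod_apply_symm hS]
        refine lintegral_congr fun s => ?_
        by_cases hs : s < t <;> simp [hs, Set.Iic]
    _ = ∫⁻ s in Set.Iio t, m (Set.Iic s) := lintegral_indicator measurableSet_Iio _

lemma exists_measure_Iic_ae_eq {k : ℝ → ℝ} (hk : Monotone k) (hk0 : 0 ≤ k t₀) :
    ∃ m : Measure ℝ, SFinite m ∧
      ∀ᵐ s, m (Set.Iic s) = (Set.Ici t₀).indicator (fun s => ENNReal.ofReal (k s)) s := by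
  have hmono : Monotone ((Set.Ici t₀).indicator k) := by
    intro s s' hs
    by_cases h : t₀ ≤ s
    · simpa [h, h.trans hs] using hk hs
    · by_cases h' : t₀ ≤ s'
      · simpa [h, h'] using hk0.trans (hk h')
      · simp [h, h']
  have hbot : Filter.Tendsto hmono.stieltjesFunction Filter.atBot (nhds 0) := by
    refine tendsto_const_nhds.congr' ?_
    filter_upwards [Filter.Iio_mem_atBot t₀] with s hs
    rw [hmono.stieltjesFunction_eq]
    refine (rightLim_eq_of_tendsto <| tendsto_const_nhds.congr' ?_).symm
    filter_upwards [mem_nhdsWithin_of_mem_nhds (Iio_mem_nhds hs)] with r hr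
    exact (Set.indicator_of_notMem (Set.notMem_Ici.2 hr) k).symm
  refine ⟨hmono.stieltjesFunction.measure, inferInstance, ?_⟩
  filter_upwards [hmono.countable_not_continuousAt.ae_notMem volume] with s hs
  rw [StieltjesFunction.measure_Iic _ hbot, hmono.stieltjesFunction_eq,
    (not_not.1 hs).continuousWithinAt.rightLim_eq, sub_zero]
  by_cases h : t₀ ≤ s <;> simp [h]

lemma continuous_of_convexOn_univ (hf : ConvexOn ℝ Set.univ f) : Continuous f :=
  continuousOn_univ.1 (hf.continuousOn isOpen_univ)

lemma exists_ofReal_eq_lintegral_hinge (hf : ConvexOn ℝ Set.univ f) (hf0 : ∀ t, 0 ≤ f t)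
    (ht₀ : f t₀ = 0) :
    ∃ m : Measure ℝ, SFinite m ∧
      ∀ t, ENNReal.ofReal (f (max t t₀)) = ∫⁻ l, ENNReal.ofReal (t - l) ∂m := by
  set k : ℝ → ℝ := fun x => derivWithin f (Set.Ioi x) x
  have hk : Monotone k := monotoneOn_univ.1 (by simpa using hf.monotoneOn_rightDeriv)
  have hk0 : 0 ≤ k t₀ := by
    simp only [k, hf.rightDeriv_eq_sInf_slope_of_mem_interior (by simp : t₀ ∈ interior Set.univ)]
    refine Real.sInf_nonneg ?_
    rintro _ ⟨y, ⟨-, hy⟩, rfl⟩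
    rw [slope_def_field, ht₀, sub_zero]
    exact div_nonneg (hf0 y) (sub_pos.2 hy).le
  obtain ⟨m, hm, hIic⟩ := exists_measure_Iic_ae_eq hk hk0
  refine ⟨m, hm, fun t => ?_⟩
  rw [lintegral_ofReal_const_sub, lintegral_congr_ae (ae_restrict_of_ae hIic),
    setLIntegral_indicator measurableSet_Ici, Set.Ici_inter_Iio]
  rcases le_total t t₀ with ht | ht
  · simp [max_eq_right ht, ht₀, Set.Ico_eq_empty_of_le ht]
  have hint : IntervalIntegrable k volume t₀ t := hk.intervalIntegrable
  have ftc : ∫ s in t₀..t, k s = f t - f t₀ :=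
    intervalIntegral.integral_eq_sub_of_hasDeriv_right
      (continuous_of_convexOn_univ hf).continuousOn
      (fun x _ => hf.hasDerivWithinAt_rightDeriv_of_mem_interior (by simp)) hint
  rw [max_eq_left ht, ← sub_zero (f t), ← ht₀, ← ftc, intervalIntegral.integral_of_le ht,
    ofReal_integral_eq_lintegral_ofReal hint.1 <|
      (ae_restrict_mem measurableSet_Ioc).mono fun x hx => hk0.trans (hk hx.1.le),
    restrict_Ico_eq_restrict_Ioc]

end Hinge

section Concordance

lemma lintegral_ofReal_sub_sub (ρ : Measure (ℝ × ℝ)) [SFinite ρ] (l : ℝ) :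
    ∫⁻ p, ENNReal.ofReal (p.1 - p.2 - l) ∂ρ = ∫⁻ s, ρ (Set.Ioi s ×ˢ Set.Iic (s - l)) := by
  have hS : MeasurableSet {q : (ℝ × ℝ) × ℝ | q.2 < q.1.1 ∧ q.1.2 ≤ q.2 - l} := by measurability
  have slice (p : ℝ × ℝ) : Prod.mk p ⁻¹' {q : (ℝ × ℝ) × ℝ | q.2 < q.1.1 ∧ q.1.2 ≤ q.2 - l} =
      Set.Ico (p.2 + l) p.1 := by
    ext s
    simp [le_sub_iff_add_le, and_comm]
  calc ∫⁻ p, ENNReal.ofReal (p.1 - p.2 - l) ∂ρ = ∫⁻ p, volume (Set.Ico (p.2 + l) p.1) ∂ρ := by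
        simp only [Real.volume_Ico, sub_sub]
    _ = (ρ.prod volume) {q | q.2 < q.1.1 ∧ q.1.2 ≤ q.2 - l} := by
        simp only [Measure.prod_apply hS, slice]
    _ = ∫⁻ s, ρ (Set.Ioi s ×ˢ Set.Iic (s - l)) := Measure.prod_apply_symm hS

/-- The concordance order on measures on the plane: the marginals agree, and `ν` gives at least as
much mass as `μ` to every upper right quadrant. -/
structure ConcordanceLE (μ ν : Measure (ℝ × ℝ)) : Prop where
  fst_eq : μ.fst = ν.fst
  snd_eq : μ.snd = ν.snd
  quadrant_le : ∀ s t, μ (Set.Ioi s ×ˢ Set.Ioi t) ≤ ν (Set.Ioi s ×ˢ Set.Ioi t)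

namespace ConcordanceLE

variable {μ ν : Measure (ℝ × ℝ)} {f J : ℝ → ℝ} {t₀ : ℝ}

lemma swap (h : ConcordanceLE μ ν) : ConcordanceLE (μ.map Prod.swap) (ν.map Prod.swap) where
  fst_eq := by rw [Measure.fst_map_swap, Measure.fst_map_swap, h.snd_eq]
  snd_eq := by rw [Measure.snd_map_swap, Measure.snd_map_swap, h.fst_eq]
  quadrant_le s t := by
    rw [Measure.map_apply measurable_swap (measurableSet_Ioi.prod measurableSet_Ioi),
      Measure.map_apply measurable_swap (measurableSet_Ioi.prod measurableSet_Ioi),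
      Set.preimage_swap_prod]
    exact h.quadrant_le t s

lemma measure_univ_eq (h : ConcordanceLE μ ν) : μ Set.univ = ν Set.univ := by
  rw [← Measure.fst_univ, h.fst_eq, Measure.fst_univ]

lemma measure_Ioi_prod_Iic_le [IsFiniteMeasure ν] (h : ConcordanceLE μ ν) (s t : ℝ) :
    ν (Set.Ioi s ×ˢ Set.Iic t) ≤ μ (Set.Ioi s ×ˢ Set.Iic t) := by
  have fst_Ioi (ρ : Measure (ℝ × ℝ)) :
      ρ (Set.Ioi s ×ˢ Set.Ioi t) + ρ (Set.Ioi s ×ˢ Set.Iic t) = ρ.fst (Set.Ioi s) := by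
    rw [Measure.fst_apply measurableSet_Ioi, ← Set.prod_univ, ← Set.Ioi_union_Iic,
      Set.prod_union, measure_union _ (measurableSet_Ioi.prod measurableSet_Iic)]
    exact Set.Disjoint.set_prod_right (Set.Iic_disjoint_Ioi le_rfl).symm _ _
  refine (ENNReal.add_le_add_iff_left (measure_ne_top ν (Set.Ioi s ×ˢ Set.Ioi t))).1 ?_
  rw [fst_Ioi, ← h.fst_eq, ← fst_Ioi]
  exact add_le_add_left (h.quadrant_le s t) _

variable [IsFiniteMeasure μ] [IsFiniteMeasure ν]

lemma lintegral_max_le (h : ConcordanceLE μ ν) (hf : ConvexOn ℝ Set.univ f)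
    (hf0 : ∀ t, 0 ≤ f t) (ht₀ : f t₀ = 0) :
    ∫⁻ p, ENNReal.ofReal (f (max (p.1 - p.2) t₀)) ∂ν ≤
      ∫⁻ p, ENNReal.ofReal (f (max (p.1 - p.2) t₀)) ∂μ := by
  obtain ⟨m, hm, hinge⟩ := exists_ofReal_eq_lintegral_hinge hf hf0 ht₀
  have hmeas : Measurable fun q : (ℝ × ℝ) × ℝ => ENNReal.ofReal (q.1.1 - q.1.2 - q.2) := by
    fun_prop
  simp only [hinge]
  rw [lintegral_lintegral_swap (μ := μ) hmeas.aemeasurable,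
    lintegral_lintegral_swap (μ := ν) hmeas.aemeasurable]
  refine lintegral_mono fun l => ?_
  simp only [lintegral_ofReal_sub_sub]
  exact lintegral_mono fun s => h.measure_Ioi_prod_Iic_le s (s - l)

lemma lintegral_le_of_eq_zero (h : ConcordanceLE μ ν) (hf : ConvexOn ℝ Set.univ f)
    (hf0 : ∀ t, 0 ≤ f t) (ht₀ : f t₀ = 0) :
    ∫⁻ p, ENNReal.ofReal (f (p.1 - p.2)) ∂ν ≤ ∫⁻ p, ENNReal.ofReal (f (p.1 - p.2)) ∂μ := by
  have hmeas : Measurable f := (continuous_of_convexOn_univ hf).measurable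
  have hneg : ConvexOn ℝ Set.univ fun t => f (-t) := by
    simpa [Function.comp_def] using hf.comp_linearMap (-LinearMap.id : ℝ →ₗ[ℝ] ℝ)
  have right := h.lintegral_max_le hf hf0 ht₀
  have left := h.swap.lintegral_max_le hneg (fun t => hf0 _) (t₀ := -t₀) (by simpa using ht₀)
  rw [lintegral_map (by fun_prop) measurable_swap, lintegral_map (by fun_prop) measurable_swap]
    at left
  have split (p : ℝ × ℝ) : ENNReal.ofReal (f (p.1 - p.2)) =
      ENNReal.ofReal (f (max (p.1 - p.2) t₀)) +
        ENNReal.ofReal (f (-max (p.swap.1 - p.swap.2) (-t₀))) := by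
    rw [← neg_sub p.swap.2, max_neg_neg, neg_neg, Prod.fst_swap, Prod.snd_swap]
    rcases le_total (p.1 - p.2) t₀ with hp | hp <;> simp [hp, ht₀]
  simp only [split]
  rw [lintegral_add_left (by fun_prop), lintegral_add_left (by fun_prop)]
  exact add_le_add right left

lemma lintegral_ofReal_sub_le (h : ConcordanceLE μ ν) (hJ : ConvexOn ℝ Set.univ J) (t₀ : ℝ) :
    ∫⁻ p, ENNReal.ofReal (J (p.1 - p.2) - J t₀) ∂ν ≤
      ∫⁻ p, ENNReal.ofReal (J (p.1 - p.2) - J t₀) ∂μ := by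
  simpa using h.lintegral_le_of_eq_zero (f := fun t => max (J t - J t₀) 0) (t₀ := t₀)
    ((hJ.sub (concaveOn_const _ convex_univ)).sup (convexOn_const 0 convex_univ)) (by simp)
    (by simp)

theorem lintegral_convex_le (h : ConcordanceLE μ ν) (hJ : ConvexOn ℝ Set.univ J)
    (hJ0 : ∀ t, 0 ≤ J t) :
    ∫⁻ p, ENNReal.ofReal (J (p.1 - p.2)) ∂ν ≤ ∫⁻ p, ENNReal.ofReal (J (p.1 - p.2)) ∂μ := by
  have hmeas : Measurable J := (continuous_of_convexOn_univ hJ).measurable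
  have hbdd : BddBelow (Set.range J) := ⟨0, Set.forall_mem_range.2 hJ0⟩
  obtain ⟨c, hc_anti, hc_tendsto, hc_mem⟩ :=
    exists_seq_tendsto_sInf (Set.range_nonempty J) hbdd
  choose t ht using hc_mem
  set i := sInf (Set.range J)
  have hi0 : 0 ≤ i := Real.sInf_nonneg (Set.forall_mem_range.2 hJ0)
  have excess_tendsto (ρ : Measure (ℝ × ℝ)) :
      Filter.Tendsto (fun n => ∫⁻ p, ENNReal.ofReal (J (p.1 - p.2) - c n) ∂ρ) Filter.atTop
        (nhds (∫⁻ p, ENNReal.ofReal (J (p.1 - p.2) - i) ∂ρ)) :=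
    lintegral_tendsto_of_tendsto_of_monotone (fun n => by fun_prop)
      (.of_forall fun p n n' hn => ENNReal.ofReal_le_ofReal (sub_le_sub_left (hc_anti hn) _))
      (.of_forall fun p => ENNReal.tendsto_ofReal (hc_tendsto.const_sub _))
  have excess_le : ∫⁻ p, ENNReal.ofReal (J (p.1 - p.2) - i) ∂ν ≤
      ∫⁻ p, ENNReal.ofReal (J (p.1 - p.2) - i) ∂μ :=
    le_of_tendsto_of_tendsto' (excess_tendsto ν) (excess_tendsto μ) fun n => by
      simpa only [ht] using h.lintegral_ofReal_sub_le hJ (t n)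
  have split (ρ : Measure (ℝ × ℝ)) : ∫⁻ p, ENNReal.ofReal (J (p.1 - p.2)) ∂ρ =
      ∫⁻ p, ENNReal.ofReal (J (p.1 - p.2) - i) ∂ρ + ENNReal.ofReal i * ρ Set.univ := by
    rw [← lintegral_const, ← lintegral_add_right _ measurable_const]
    refine lintegral_congr fun p => ?_
    rw [← ENNReal.ofReal_add (sub_nonneg.2 (csInf_le hbdd ⟨_, rfl⟩)) hi0, sub_add_cancel]
  rw [split ν, split μ, h.measure_univ_eq]
  gcongr

end ConcordanceLE

end Concordance

section LayerCake

variable {G : Type*} [AddCommGroup G] [MeasurableSpace G] [MeasurableAdd₂ G] [MeasurableNeg G]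
  {μ : Measure G} [SFinite μ]

lemma lintegral_mul_ofReal_sub {F : G × G → ENNReal} {K : G → ℝ} (hF : Measurable F)
    (hK : Measurable K) :
    ∫⁻ x, ∫⁻ y, F (x, y) * ENNReal.ofReal (K (x - y)) ∂μ ∂μ =
      ∫⁻ s in Set.Ioi 0, ∫⁻ p, F p ∂diffMeasure μ {z | s < K z} := by
  have hdiff : Measurable fun p : G × G => K (p.1 - p.2) := by fun_prop
  have hS : MeasurableSet {q : (G × G) × ℝ | q.2 < K (q.1.1 - q.1.2)} :=
    measurableSet_lt measurable_snd (hdiff.comp measurable_fst)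
  have hFS : Measurable fun q : (G × G) × ℝ =>
      F q.1 * Set.indicator {q | q.2 < K (q.1.1 - q.1.2)} 1 q :=
    (hF.comp measurable_fst).mul (measurable_one.indicator hS)
  have layer (c : ENNReal) (a : ℝ) :
      c * ENNReal.ofReal a = ∫⁻ s in Set.Ioi 0, c * (Set.Iio a).indicator 1 s := by
    rw [lintegral_const_mul _ (measurable_one.indicator measurableSet_Iio),
      lintegral_indicator_one measurableSet_Iio, Measure.restrict_apply measurableSet_Iio,
      Set.Iio_inter_Ioi, Real.volume_Ioo, sub_zero]
  have slice (s : ℝ) : ∫⁻ p, F p ∂diffMeasure μ {z | s < K z} =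
      ∫⁻ p, F p * (Set.Iio (K (p.1 - p.2))).indicator 1 s ∂μ.prod μ := by
    have hs : MeasurableSet {p : G × G | p.1 - p.2 ∈ {z | s < K z}} := hdiff measurableSet_Ioi
    rw [diffMeasure, ← lintegral_indicator hs]
    refine lintegral_congr fun p => ?_
    by_cases hp : s < K (p.1 - p.2) <;> simp [hp]
  calc ∫⁻ x, ∫⁻ y, F (x, y) * ENNReal.ofReal (K (x - y)) ∂μ ∂μ
      = ∫⁻ p, F p * ENNReal.ofReal (K (p.1 - p.2)) ∂μ.prod μ :=
        (lintegral_prod _ (hF.mul hdiff.ennreal_ofReal).aemeasurable).symm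
    _ = ∫⁻ s in Set.Ioi 0, ∫⁻ p, F p * (Set.Iio (K (p.1 - p.2))).indicator 1 s ∂μ.prod μ := by
        simp only [layer]
        exact lintegral_lintegral_swap hFS.aemeasurable
    _ = ∫⁻ s in Set.Ioi 0, ∫⁻ p, F p ∂diffMeasure μ {z | s < K z} := by simp only [slice]

end LayerCake

section CircleRearrangement

variable {T : ℝ} [hT : Fact (0 < T)] {U U' V V' K K' : AddCircle T → ℝ} {J : ℝ → ℝ}
  {C C' : Set (AddCircle T)}

/-- `U'` is a symmetric decreasing rearrangement of `U` on the circle: up to null sets, its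
superlevel sets are the rearrangements of those of `U`. -/
structure IsSymmRearr (U' U : AddCircle T → ℝ) : Prop where
  measurable : Measurable U'
  superlevel_ae_eq : ∀ s, {x | s < U' x} =ᵐ[volume] arcSymm {x | s < U x}

lemma IsSymmRearr.map_eq (h : IsSymmRearr U' U) (hU : Measurable U) :
    volume.map U' = volume.map U := by
  refine Measure.ext_of_Iic _ _ fun s => ?_
  rw [← Set.compl_Ioi, ← measureReal_eq_measureReal_iff, measureReal_compl measurableSet_Ioi,
    measureReal_compl measurableSet_Ioi, map_measureReal_apply h.measurable .univ,
    map_measureReal_apply hU .univ, map_measureReal_apply h.measurable measurableSet_Ioi,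
    map_measureReal_apply hU measurableSet_Ioi]
  congr 1
  exact (measureReal_congr (h.superlevel_ae_eq s)).trans (measureReal_arcSymm _)

lemma measure_eq_of_ae_eq_arcSymm (h : C' =ᵐ[volume] arcSymm C) : volume C' = volume C :=
  (measureReal_eq_measureReal_iff).1 ((measureReal_congr h).trans (measureReal_arcSymm C))

lemma concordanceLE_map_diffMeasure (hU : Measurable U) (hV : Measurable V)
    (hU' : IsSymmRearr U' U) (hV' : IsSymmRearr V' V) (hC : MeasurableSet C)
    (hC' : MeasurableSet C') (hCC' : C' =ᵐ[volume] arcSymm C) :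
    ConcordanceLE ((diffMeasure volume C).map (Prod.map U V))
      ((diffMeasure volume C').map (Prod.map U' V')) where
  fst_eq := by
    rw [fst_map_prodMap_diffMeasure volume hU hV hC,
      fst_map_prodMap_diffMeasure volume hU'.measurable hV'.measurable hC', hU'.map_eq hU,
      measure_eq_of_ae_eq_arcSymm hCC']
  snd_eq := by
    rw [snd_map_prodMap_diffMeasure volume hU hV hC,
      snd_map_prodMap_diffMeasure volume hU'.measurable hV'.measurable hC', hV'.map_eq hV,
      measure_eq_of_ae_eq_arcSymm hCC']
  quadrant_le s t := by
    have hst : MeasurableSet (Set.Ioi s ×ˢ Set.Ioi t) := measurableSet_Ioi.prod measurableSet_Ioi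
    rw [Measure.map_apply (hU.prodMap hV) hst,
      Measure.map_apply (hU'.measurable.prodMap hV'.measurable) hst]
    exact diffMeasure_prod_le (hU measurableSet_Ioi) (hV measurableSet_Ioi) hC
      (hU'.measurable measurableSet_Ioi) (hV'.measurable measurableSet_Ioi) hC'
      (hU'.superlevel_ae_eq s) (hV'.superlevel_ae_eq t) hCC'

theorem lintegral_convex_symmRearr_le (hJ : ConvexOn ℝ Set.univ J) (hJ0 : ∀ t, 0 ≤ J t)
    (hU : Measurable U) (hV : Measurable V) (hK : Measurable K)
    (hU' : IsSymmRearr U' U) (hV' : IsSymmRearr V' V) (hK' : IsSymmRearr K' K) :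
    ∫⁻ x, ∫⁻ y, ENNReal.ofReal (J (U' x - V' y) * K' (x - y)) ≤
      ∫⁻ x, ∫⁻ y, ENNReal.ofReal (J (U x - V y) * K (x - y)) := by
  have hJm : Measurable J := (continuous_of_convexOn_univ hJ).measurable
  have layer {U V K : AddCircle T → ℝ} (hU : Measurable U) (hV : Measurable V)
      (hK : Measurable K) :
      ∫⁻ x, ∫⁻ y, ENNReal.ofReal (J (U x - V y) * K (x - y)) =
        ∫⁻ s in Set.Ioi 0, ∫⁻ p, ENNReal.ofReal (J (p.1 - p.2))
          ∂(diffMeasure volume {z | s < K z}).map (Prod.map U V) := by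
    have hmeas : Measurable fun p : ℝ × ℝ => ENNReal.ofReal (J (p.1 - p.2)) := by fun_prop
    have hUV := hU.prodMap hV
    simp only [ENNReal.ofReal_mul (hJ0 _), lintegral_map hmeas hUV]
    exact lintegral_mul_ofReal_sub (hmeas.comp hUV) hK
  rw [layer hU hV hK, layer hU'.measurable hV'.measurable hK'.measurable]
  refine lintegral_mono fun s => (concordanceLE_map_diffMeasure hU hV hU' hV' ?_ ?_
    (hK'.superlevel_ae_eq s)).lintegral_convex_le hJ hJ0
  · exact measurableSet_lt measurable_const hK
  · exact measurableSet_lt measurable_const hK'.measurable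

end CircleRearrangement

section DecreasingRearrangement

variable {α β : Type*} [MeasurableSpace α] [MeasurableSpace β] {μ : Measure α} {ν : Measure β}
  {f f' : α → ℝ} {c s : ℝ}

/-- The decreasing rearrangement on `(0, ∞)` of a nonnegative function `f`, written through the
layer-cake formula: the length of the set of positive levels `t` with `c < μ {f > t}`. It is the
junk value `0` where this length is infinite, as at `c = 0` for an essentially unbounded `f`. -/
noncomputable def decRearr (μ : Measure α) (f : α → ℝ) (c : ℝ) : ℝ :=
  volume.real {t | 0 < t ∧ c < μ.real {x | t < f x}}

lemma decRearr_nonneg (μ : Measure α) (f : α → ℝ) (c : ℝ) : 0 ≤ decRearr μ f c :=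
  measureReal_nonneg

lemma decRearr_congr_ae (h : f =ᵐ[μ] f') : decRearr μ f = decRearr μ f' := by
  have hlevel (t : ℝ) : μ.real {x | t < f x} = μ.real {x | t < f' x} :=
    measureReal_congr <| h.mono fun x hx => by
      change (t < f x) = (t < f' x)
      rw [hx]
  funext c
  simp only [decRearr, hlevel]

lemma decRearr_comp_measurePreserving {φ : α → β} (hφ : MeasurePreserving φ μ ν) {F : β → ℝ}
    (hF : Measurable F) : decRearr μ (F ∘ φ) = decRearr ν F := by
  have hlevel (t : ℝ) : μ.real {x | t < (F ∘ φ) x} = ν.real {y | t < F y} :=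
    hφ.measureReal_preimage (measurableSet_lt measurable_const hF).nullMeasurableSet
  funext c
  simp only [decRearr, hlevel]

variable [IsFiniteMeasure μ]

lemma antitone_measureReal_lt (μ : Measure α) [IsFiniteMeasure μ] (f : α → ℝ) :
    Antitone fun t => μ.real {x | t < f x} :=
  fun _ _ hst => measureReal_mono fun _ hx => hst.trans_lt hx

lemma exists_gt_lt_measureReal_lt (h : c < μ.real {x | s < f x}) :
    ∃ s' > s, c < μ.real {x | s' < f x} := by
  obtain ⟨t, ht, hst, hlim⟩ := exists_seq_strictAnti_tendsto s
  have hmono : Monotone fun n => {x | t n < f x} := fun _ _ hmn _ hx =>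
    (ht.antitone hmn).trans_lt hx
  have hunion : ⋃ n, {x | t n < f x} = {x | s < f x} := by
    ext x
    simp only [Set.mem_iUnion, Set.mem_ofPred_eq]
    exact ⟨fun ⟨n, hn⟩ => (hst n).trans hn, fun hx => (hlim.eventually_lt_const hx).exists⟩
  have htendsto := (ENNReal.tendsto_toReal (measure_ne_top μ _)).comp
    (tendsto_measure_iUnion_atTop (μ := μ) hmono)
  rw [hunion] at htendsto
  obtain ⟨n, hn⟩ := (htendsto.eventually_const_lt h).exists
  exact ⟨t n, hst n, hn⟩

lemma exists_measureReal_lt_lt (hf : Measurable f) (hc : 0 < c) :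
    ∃ t, μ.real {x | t < f x} < c := by
  have hanti : Antitone fun n : ℕ => {x | (n : ℝ) < f x} := fun _ n hmn x (hx : (n : ℝ) < f x) =>
    (Nat.cast_le.2 hmn).trans_lt hx
  have hinter : ⋂ n : ℕ, {x | (n : ℝ) < f x} = ∅ := by
    refine Set.eq_empty_of_forall_notMem fun x hx => ?_
    obtain ⟨n, hn⟩ := exists_nat_gt (f x)
    exact hn.not_gt (Set.mem_iInter.1 hx n)
  have htendsto := (ENNReal.tendsto_toReal (measure_ne_top μ _)).comp
    (tendsto_measure_iInter_atTop (μ := μ)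
      (fun _ => (measurableSet_lt measurable_const hf).nullMeasurableSet) hanti
      ⟨0, measure_ne_top μ _⟩)
  rw [hinter, measure_empty] at htendsto
  obtain ⟨n, hn⟩ := (htendsto.eventually_lt_const hc).exists
  exact ⟨n, hn⟩

lemma lt_decRearr_iff (hf : Measurable f) (hc : 0 < c) (hs : 0 ≤ s) :
    s < decRearr μ f c ↔ c < μ.real {x | s < f x} := by
  have levels_subset {t : ℝ} (ht : μ.real {x | t < f x} ≤ c) :
      {t | 0 < t ∧ c < μ.real {x | t < f x}} ⊆ Set.Ioo 0 t := fun r hr =>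
    ⟨hr.1, lt_of_not_ge fun htr => (hr.2.trans_le (antitone_measureReal_lt μ f htr)).not_ge ht⟩
  refine ⟨fun h => ?_, fun h => ?_⟩
  · by_contra! hle
    refine h.not_ge ((measureReal_mono (levels_subset hle) measure_Ioo_lt_top.ne).trans_eq ?_)
    rw [Real.volume_real_Ioo_of_le hs, sub_zero]
  · obtain ⟨s', hss', hs'⟩ := exists_gt_lt_measureReal_lt h
    obtain ⟨t, ht⟩ := exists_measureReal_lt_lt (μ := μ) hf hc
    calc s < volume.real (Set.Ioo 0 s') := by
          rwa [Real.volume_real_Ioo_of_le (hs.trans hss'.le), sub_zero]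
      _ ≤ decRearr μ f c := measureReal_mono
          (fun r hr => ⟨hr.1, hs'.trans_le (antitone_measureReal_lt μ f hr.2.le)⟩)
          (measure_ne_top_of_subset (levels_subset ht.le) measure_Ioo_lt_top.ne)

lemma measurable_decRearr (μ : Measure α) [IsFiniteMeasure μ] (f : α → ℝ) :
    Measurable (decRearr μ f) := by
  have hm := (antitone_measureReal_lt μ f).measurable
  have hS : MeasurableSet {p : ℝ × ℝ | 0 < p.2 ∧ p.1 < μ.real {x | p.2 < f x}} :=
    (measurableSet_lt measurable_const measurable_snd).inter
      (measurableSet_lt measurable_fst (hm.comp measurable_snd))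
  exact (measurable_measure_prodMk_left hS).ennreal_toReal

end DecreasingRearrangement

section CircleDecreasingRearrangement

variable {T : ℝ} [hT : Fact (0 < T)] {U : AddCircle T → ℝ}

lemma arcSymm_univ_ae_eq : arcSymm (Set.univ : Set (AddCircle T)) =ᵐ[volume] Set.univ := by
  have hball : Metric.closedBall (0 : AddCircle T) (T / 2) = Set.univ :=
    AddCircle.closedBall_eq_univ_of_half_period_le T hT.out.ne' 0 (by rw [abs_of_pos hT.out])
  rw [arcSymm, measureReal_univ_addCircle, ← hball]
  exact AddCircle.closedBall_ae_eq_ball.symm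

/-- The symmetric decreasing rearrangement of a nonnegative function `U` on the circle; `2 * ‖x‖` is
the length of the centred arc with endpoint `x`. -/
noncomputable def circleRearr (U : AddCircle T → ℝ) (x : AddCircle T) : ℝ :=
  decRearr volume U (2 * ‖x‖)

lemma isSymmRearr_circleRearr (hU : Measurable U) (hU0 : ∀ x, 0 ≤ U x) :
    IsSymmRearr (circleRearr U) U where
  measurable := (measurable_decRearr volume U).comp (by fun_prop)
  superlevel_ae_eq s := by
    rcases lt_or_ge s 0 with hs | hs
    · have hrearr (x) : s < circleRearr U x := hs.trans_le (decRearr_nonneg _ _ _)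
      simp only [hs.trans_le (hU0 _), hrearr]
      exact arcSymm_univ_ae_eq.symm
    · have hne : ∀ᵐ x : AddCircle T, x ≠ 0 := by
        rw [ae_iff]
        simpa using AddCircle.volume_closedBall (T := T) (x := 0) 0
      filter_upwards [hne] with x hx
      refine propext ((lt_decRearr_iff hU (by positivity) hs).trans ?_)
      exact (lt_div_iff₀' two_pos).symm.trans mem_ball_zero_iff.symm

lemma lintegral_Ioo_coe_addCircle (a : ℝ) (F : AddCircle T → ENNReal) :
    ∫⁻ x in Set.Ioo a (a + T), F x = ∫⁻ q, F q := by
  rw [restrict_Ioo_eq_restrict_Ioc, AddCircle.lintegral_preimage]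

lemma measurable_liftIoc (a : ℝ) {u : ℝ → ℝ} (hu : Measurable u) :
    Measurable (AddCircle.liftIoc T a u) :=
  (hu.comp measurable_subtype_coe).comp (AddCircle.measurableEquivIoc T a).measurable

lemma liftIoc_coe_of_periodic (a : ℝ) {u : ℝ → ℝ} (hu : Function.Periodic u T) (x : ℝ) :
    AddCircle.liftIoc T a u x = u x := by
  change hu.lift (AddCircle.equivIoc T a x : ℝ) = hu.lift x
  rw [AddCircle.coe_equivIoc]

lemma decRearr_liftIoc (a : ℝ) {u : ℝ → ℝ} (hu : Measurable u) :
    decRearr volume (AddCircle.liftIoc T a u) =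
      decRearr (volume.restrict (Set.Ioo a (a + T))) u := by
  rw [restrict_Ioo_eq_restrict_Ioc, ← decRearr_comp_measurePreserving
    (AddCircle.measurePreserving_mk T a) (measurable_liftIoc a hu)]
  refine decRearr_congr_ae ?_
  filter_upwards [ae_restrict_mem measurableSet_Ioc] with x hx
  exact AddCircle.liftIoc_coe_apply hx

end CircleDecreasingRearrangement

section PeriodicRearrangement

variable {u : ℝ → ℝ} {x : ℝ}

lemma mem_symmSet_iff (A : Set ℝ) : x ∈ symmSet A ↔ 2 * |x| < volume.real A := by
  rw [symmSet, Set.mem_Ioo, ← abs_lt, lt_div_iff₀' two_pos, measureReal_def]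

lemma symmRearr_eq_decRearr (u : ℝ → ℝ) (x : ℝ) :
    symmRearr u x = decRearr (volume.restrict (Set.Ioo (-π) π)) u (2 * |x|) := by
  set m : ℝ → ℝ := fun t => (volume.restrict (Set.Ioo (-π) π)).real {y | t < u y} with hm
  have hmeas : MeasurableSet {t | 2 * |x| < m t} :=
    measurableSet_lt measurable_const (antitone_measureReal_lt _ u).measurable
  have hlevel (t : ℝ) : x ∈ symmSet {y | y ∈ Set.Ioo (-π) π ∧ t < u y} ↔ 2 * |x| < m t := by
    simp only [mem_symmSet_iff, hm, measureReal_restrict_apply' measurableSet_Ioo]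
    rw [Set.inter_comm, Set.inter_def]
    rfl
  calc symmRearr u x = ∫ t in Set.Ioi 0, {t | 2 * |x| < m t}.indicator (fun _ => 1) t :=
        integral_congr_ae <| .of_forall fun t => Set.indicator_eq_indicator (hlevel t) rfl
    _ = volume.real (Set.Ioi 0 ∩ {t | 2 * |x| < m t}) := by
        rw [setIntegral_indicator hmeas, setIntegral_const, smul_eq_mul, mul_one]
    _ = decRearr (volume.restrict (Set.Ioo (-π) π)) u (2 * |x|) := rfl

lemma fact_two_pi_pos : Fact (0 < 2 * π) := ⟨two_pi_pos⟩

attribute [local instance] fact_two_pi_pos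

lemma symmRearr_eq_circleRearr (hu : Measurable u) (hx : |x| ≤ π) :
    symmRearr u x = circleRearr (AddCircle.liftIoc (2 * π) (-π) u) x := by
  have hnorm : ‖(x : AddCircle (2 * π))‖ = |x| := by
    rwa [AddCircle.norm_coe_eq_abs_iff (2 * π) two_pi_pos.ne', abs_of_pos two_pi_pos,
      mul_div_cancel_left₀ π two_ne_zero]
  rw [symmRearr_eq_decRearr, circleRearr, decRearr_liftIoc (-π) hu, hnorm]
  ring_nf

lemma perRearr_eq_circleRearr (hu : Measurable u) (x : ℝ) :
    perRearr u x = circleRearr (AddCircle.liftIoc (2 * π) (-π) u) x := by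
  have hround : round ((2 * π)⁻¹ * x) = ⌊(x + π) / (2 * π)⌋ := by
    rw [round_eq]
    congr 1
    field_simp
  rw [perRearr, periodize, symmRearr_eq_decRearr, circleRearr, decRearr_liftIoc (-π) hu,
    AddCircle.norm_eq, hround]
  ring_nf

lemma lintegral_Ioo_convolution_eq_addCircle {u v k : ℝ → ℝ} {U V K : AddCircle (2 * π) → ℝ}
    (J : ℝ → ℝ) (hU : ∀ x ∈ Set.Ioo (-π) π, u x = U x) (hV : ∀ x ∈ Set.Ioo (-π) π, v x = V x)
    (hK : ∀ x : ℝ, k x = K x) :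
    ∫⁻ x in Set.Ioo (-π) π, ∫⁻ y in Set.Ioo (-π) π, ENNReal.ofReal (J (u x - v y) * k (x - y)) =
      ∫⁻ x, ∫⁻ y, ENNReal.ofReal (J (U x - V y) * K (x - y)) := by
  have hIoo (F : AddCircle (2 * π) → ENNReal) : ∫⁻ x in Set.Ioo (-π) π, F x = ∫⁻ q, F q := by
    rw [← lintegral_Ioo_coe_addCircle (-π), show -π + 2 * π = π by ring]
  rw [← hIoo]
  refine setLIntegral_congr_fun measurableSet_Ioo fun x hx => ?_
  simp only [← hIoo]
  refine setLIntegral_congr_fun measurableSet_Ioo fun y hy => ?_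
  simp only [hU x hx, hV y hy, hK, AddCircle.coe_sub]

end PeriodicRearrangement

theorem stmt_3_general
    (J : ℝ → ℝ) (hJnonneg : ∀ t, 0 ≤ J t) (hJconv : ConvexOn ℝ Set.univ J)
    (g : ℝ → ℝ) (hgmeas : Measurable g) (hgnonneg : ∀ x, 0 ≤ g x)
    (hgper : ∀ x, g (x + 2 * π) = g x)
    (u v : ℝ → ℝ) (humeas : Measurable u) (hvmeas : Measurable v)
    (hu0 : ∀ x, 0 ≤ u x) (hv0 : ∀ x, 0 ≤ v x) :
    (∫⁻ x in Set.Ioo (-π) π, ∫⁻ y in Set.Ioo (-π) π,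
        ENNReal.ofReal (J (symmRearr u x - symmRearr v y) * perRearr g (x - y))) ≤
      ∫⁻ x in Set.Ioo (-π) π, ∫⁻ y in Set.Ioo (-π) π,
        ENNReal.ofReal (J (u x - v y) * g (x - y)) := by
  have := fact_two_pi_pos
  have isRearr {f : ℝ → ℝ} (hf : Measurable f) (hf0 : ∀ x, 0 ≤ f x) :=
    isSymmRearr_circleRearr (measurable_liftIoc (T := 2 * π) (-π) hf) fun _ => hf0 _
  have symmRearr_eq {f : ℝ → ℝ} (hf : Measurable f) (x : ℝ) (hx : x ∈ Set.Ioo (-π) π) :=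
    symmRearr_eq_circleRearr hf (abs_lt.2 hx).le
  have eq_lift (f : ℝ → ℝ) (x : ℝ) (hx : x ∈ Set.Ioo (-π) π) :
      f x = AddCircle.liftIoc (2 * π) (-π) f x :=
    (AddCircle.liftIoc_coe_apply ⟨hx.1, by linarith [hx.2]⟩).symm
  rw [lintegral_Ioo_convolution_eq_addCircle J (symmRearr_eq humeas) (symmRearr_eq hvmeas)
      (perRearr_eq_circleRearr hgmeas),
    lintegral_Ioo_convolution_eq_addCircle J (eq_lift u) (eq_lift v)
      fun x => (liftIoc_coe_of_periodic (-π) hgper x).symm]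
  exact lintegral_convex_symmRearr_le hJconv hJnonneg (measurable_liftIoc _ humeas)
    (measurable_liftIoc _ hvmeas) (measurable_liftIoc _ hgmeas) (isRearr humeas hu0)
    (isRearr hvmeas hv0) (isRearr hgmeas hgnonneg)

theorem stmt_3
    (J : ℝ → ℝ) (hJnonneg : ∀ t, 0 ≤ J t) (hJconv : ConvexOn ℝ Set.univ J)
    (g : ℝ → ℝ) (hgmeas : Measurable g) (hgnonneg : ∀ x, 0 ≤ g x)
    (hgper : ∀ x, g (x + 2 * π) = g x) (hgint : IntegrableOn g (Set.Ioo (-π) π))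
    (u v : ℝ → ℝ) (humeas : Measurable u) (hvmeas : Measurable v)
    (hu0 : ∀ x, 0 ≤ u x) (hv0 : ∀ x, 0 ≤ v x)
    (hfin : (∫⁻ x in Set.Ioo (-π) π, ∫⁻ y in Set.Ioo (-π) π,
        ENNReal.ofReal (J (u x - v y) * g (x - y))) ≠ ⊤) :
    (∫⁻ x in Set.Ioo (-π) π, ∫⁻ y in Set.Ioo (-π) π,
        ENNReal.ofReal (J (symmRearr u x - symmRearr v y) * perRearr g (x - y))) ≤
      ∫⁻ x in Set.Ioo (-π) π, ∫⁻ y in Set.Ioo (-π) π,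
        ENNReal.ofReal (J (u x - v y) * g (x - y)) := by
  exact stmt_3_general J hJnonneg hJconv g hgmeas hgnonneg hgper u v humeas hvmeas hu0 hv0
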